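/- In the abelian category Sh(G) of sheaves of ℚ-vector spaces on G = SU(2), one has Ext^0_{Sh(G)}(K, K) ≅ ℚ and Ext^n_{Sh(G)}(K, K) = 0 for all n ≠ 0. -/

import Mathlib

open CategoryTheory TopologicalSpace Limits

noncomputable section

/-- The special unitary group `SU(2)`, as the kernel of the determinant on the unitary group
of 2×2 complex matrices. -/
abbrev SU2 : Subgroup (Matrix.unitaryGroup (Fin 2) ℂ) :=
  MonoidHom.ker (Matrix.detMonoidHom.comp (Matrix.unitaryGroup (Fin 2) ℂ).subtype)

/-- `SU(2)` as a topological space. -/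
abbrev GTop : TopCat := TopCat.of SU2

/-- The category of sheaves of `ℚ`-vector spaces on `SU(2)`. -/
abbrev ShG : Type _ := Sheaf (Opens.grothendieckTopology GTop) (ModuleCat.{0} ℚ)

attribute [local instance] Classical.propDecidable

/-- The constant sheaf `ℚ_G` on `SU(2)`. -/
def QG : ShG :=
  (constantSheaf (Opens.grothendieckTopology GTop) (ModuleCat.{0} ℚ)).obj (ModuleCat.of ℚ ℚ)

/-- The skyscraper sheaf `i_* ℚ` at the identity element of `SU(2)`. -/
def skyQ : ShG := skyscraperSheaf (X := GTop) (1 : SU2) (ModuleCat.of ℚ ℚ)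

/-- The unit `ℚ_G ⟶ i_* i^* ℚ_G` of the stalk/skyscraper adjunction at the identity. -/
def unitQG := (stalkSkyscraperSheafAdjunction (C := ModuleCat.{0} ℚ) (X := GTop)
  (1 : SU2)).unit.app QG

/-- `K` is the kernel of the unit `ℚ_G ⟶ i_* i^* ℚ_G`; equivalently, the extension by zero
of the constant sheaf `ℚ` on `SU(2) ∖ {1}`. -/
def KK : ShG := kernel unitQG

instance : HasDerivedCategory ShG := HasDerivedCategory.standard _
instance : HasExt.{1} ShG := hasExt_of_hasDerivedCategory _

open Opposite

abbrev SX (X : TopCat.{0}) := Sheaf (Opens.grothendieckTopology X) (ModuleCat.{0} ℚ)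

/-- sections of a sheaf -/
abbrev Sec {X : TopCat.{0}} (F : SX X) (V : Opens X) : Type := F.obj.obj (op V)

def res {X : TopCat.{0}} (F : SX X) {V W : Opens X} (h : W ≤ V) : Sec F V →ₗ[ℚ] Sec F W :=
  (F.obj.map (homOfLE h).op).hom

def sm {X : TopCat.{0}} {F G : SX X} (φ : F ⟶ G) (V : Opens X) : Sec F V →ₗ[ℚ] Sec G V :=
  (φ.hom.app (op V)).hom

lemma res_res {X : TopCat.{0}} (F : SX X) {V W Z : Opens X} (h : W ≤ V) (h' : Z ≤ W) (s : Sec F V) :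
    res F h' (res F h s) = res F (h'.trans h) s := by
  unfold res
  rw [← LinearMap.comp_apply, ← ModuleCat.hom_comp, ← F.obj.map_comp]
  rfl

lemma res_self {X : TopCat.{0}} (F : SX X) {V : Opens X} (h : V ≤ V) (s : Sec F V) :
    res F h s = s := by
  unfold res
  have : (homOfLE h).op = 𝟙 (op V) := rfl
  rw [this, F.obj.map_id]; rfl

lemma sm_res {X : TopCat.{0}} {F G : SX X} (φ : F ⟶ G) {V W : Opens X} (h : W ≤ V) (s : Sec F V) :
    sm φ W (res F h s) = res G h (sm φ V s) := by
  unfold res sm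
  rw [← LinearMap.comp_apply, ← ModuleCat.hom_comp, φ.hom.naturality]
  rfl

lemma sm_comp {X : TopCat.{0}} {F G H : SX X} (φ : F ⟶ G) (ψ : G ⟶ H) (V : Opens X) (s : Sec F V) :
    sm (φ ≫ ψ) V s = sm ψ V (sm φ V s) := rfl

lemma glue {X : TopCat.{0}} (F : SX X) {ι : Type} (U : ι → Opens X) (V : Opens X)
    (hU : ∀ i, U i ≤ V) (hV : V ≤ iSup U) (sf : ∀ i, Sec F (U i))
    (h : ∀ i j, res F (inf_le_left : U i ⊓ U j ≤ U i) (sf i) =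
      res F (inf_le_right : U i ⊓ U j ≤ U j) (sf j)) :
    ∃ s : Sec F V, ∀ i, res F (hU i) s = sf i :=
  (TopCat.Sheaf.existsUnique_gluing' (C := ModuleCat.{0} ℚ) (X := X) F U V (fun i => homOfLE (hU i)) hV sf
    (fun i j => h i j)).exists

lemma sec_ext {X : TopCat.{0}} (F : SX X) {ι : Type} (U : ι → Opens X) (V : Opens X)
    (hU : ∀ i, U i ≤ V) (hV : V ≤ iSup U) (s t : Sec F V)
    (h : ∀ i, res F (hU i) s = res F (hU i) t) : s = t :=
  TopCat.Sheaf.eq_of_locally_eq' (C := ModuleCat.{0} ℚ) (X := X) F U V (fun i => homOfLE (hU i)) hV s t h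

/-- pointwise version -/
lemma sec_ext' {X : TopCat.{0}} (F : SX X) (V : Opens X) (s t : Sec F V)
    (h : ∀ x ∈ V, ∃ (W : Opens X) (hW : W ≤ V), x ∈ W ∧ res F hW s = res F hW t) : s = t := by
  choose! W hW hx he using h
  refine sec_ext F (fun x : V => W x.1) V (fun x => hW x.1 x.2) ?_ s t (fun x => he x.1 x.2)
  intro x hxV
  exact Opens.mem_iSup.2 ⟨⟨x, hxV⟩, hx x hxV⟩

lemma glue2 {X : TopCat.{0}} (F : SX X) {A B V : Opens X} (hA : A ≤ V) (hB : B ≤ V) (hV : V ≤ A ⊔ B)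
    (a : Sec F A) (b : Sec F B)
    (h : res F (inf_le_left : A ⊓ B ≤ A) a = res F (inf_le_right : A ⊓ B ≤ B) b) :
    ∃ s : Sec F V, res F hA s = a ∧ res F hB s = b := by
  obtain ⟨s, hs⟩ := glue F (ι := Bool) (fun i => bif i then A else B) V
    (by rintro (_|_); exacts [hB, hA]) (by
      intro x hx
      rcases hV hx with hx | hx
      · exact Opens.mem_iSup.2 ⟨true, hx⟩
      · exact Opens.mem_iSup.2 ⟨false, hx⟩)
    (fun i => match i with
      | true => a
      | false => b) (by
      rintro (_|_) (_|_)
      · rfl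
      · have := congrArg (res F (le_of_eq (inf_comm B A))) h
        rw [res_res, res_res] at this
        exact this.symm
      · exact h
      · rfl)
  exact ⟨s, hs true, hs false⟩

lemma locsurj {X : TopCat.{0}} {F G : SX X} (φ : F ⟶ G) (hφ : Epi φ) (V : Opens X) (s : Sec G V)
    (x : X) (hx : x ∈ V) : ∃ (W : Opens X) (hW : W ≤ V) (t : Sec F W), x ∈ W ∧ sm φ W t = res G hW s := by
  have := (TopCat.Sheaf.isLocallySurjective_iff_epi (X := X) (C := ModuleCat.{0} ℚ) φ).mpr hφ
  obtain ⟨W, Wle, ⟨t₁, ht₁⟩, hW⟩ := (TopCat.Presheaf.isLocallySurjective_iff φ.hom).mp this V s x hx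
  exact ⟨W, Wle, t₁, hW, ht₁⟩


lemma secexact {X : TopCat.{0}} {S : ShortComplex (SX X)} (hS : S.ShortExact) (V : Opens X)
    (s : Sec S.X₂ V) (h : sm S.g V s = 0) : ∃ t, sm S.f V t = s := by
  have := hS.mono_f
  let Φ : SX X ⥤ ModuleCat.{0} ℚ := sheafToPresheaf _ _ ⋙ (evaluation _ _).obj (op V)
  have : PreservesFiniteLimits Φ := by dsimp only [Φ]; infer_instance
  have : Φ.Additive := by dsimp only [Φ]; infer_instance
  have h2 := (S.map Φ).moduleCat_exact_iff.1 
    (((Functor.preservesFiniteLimits_tfae Φ).out 1 3 rfl rfl).mpr inferInstance S ⟨hS.exact, hS.mono_f⟩).1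
  exact h2 s h

lemma secinj {X : TopCat.{0}} {F G : SX X} (φ : F ⟶ G) (hφ : Mono φ) (V : Opens X) :
    Function.Injective (sm φ V) := by
  let Φ : SX X ⥤ ModuleCat.{0} ℚ := sheafToPresheaf _ _ ⋙ (evaluation _ _).obj (op V)
  have : PreservesFiniteLimits Φ := by dsimp only [Φ]; infer_instance
  exact (ModuleCat.mono_iff_injective (Φ.map φ)).1 inferInstance

/-- free presheaf on `U` -/
abbrev PP {X : TopCat.{0}} (U : Opens X) : (Opens X)ᵒᵖ ⥤ ModuleCat.{0} ℚ :=
  yoneda.obj U ⋙ ModuleCat.free ℚ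

def gen {X : TopCat.{0}} {U V : Opens X} (h : V ≤ U) : (PP U).obj (op V) :=
  ModuleCat.freeMk (homOfLE h)

lemma PP_map {X : TopCat.{0}} {U V W : Opens X} (h : V ≤ U) (h' : W ≤ V) :
    (PP U).map (homOfLE h').op (gen h) = gen (h'.trans h) := by
  exact ModuleCat.free_map_apply _ _

def toHom {X : TopCat.{0}} {U : Opens X} (F : (Opens X)ᵒᵖ ⥤ ModuleCat.{0} ℚ) (s : F.obj (op U)) :
    PP U ⟶ F where
  app V := ModuleCat.freeDesc (↾ fun (f : V.unop ⟶ U) => F.map f.op s)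
  naturality V W f := by
    refine ModuleCat.free_hom_ext (fun (x : V.unop ⟶ U) => ?_)
    have h1 : (PP U).map f (ModuleCat.freeMk x) = ModuleCat.freeMk (f.unop ≫ x) :=
      ModuleCat.free_map_apply _ _
    have h2 := ModuleCat.freeDesc_apply (R := ℚ) (↾ fun (f : V.unop ⟶ U) => F.map f.op s) x
    have h3 := ModuleCat.freeDesc_apply (R := ℚ) (↾ fun (f : W.unop ⟶ U) => F.map f.op s)
      (f.unop ≫ x)
    rw [ConcreteCategory.comp_apply, ConcreteCategory.comp_apply]
    refine (congrArg _ h1).trans (h3.trans ?_)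
    refine Eq.trans ?_ (congrArg _ h2.symm)
    change F.map (f.unop ≫ x).op s = F.map f (F.map x.op s)
    rw [← ConcreteCategory.comp_apply, ← F.map_comp]
    rfl

lemma toHom_gen {X : TopCat.{0}} {U : Opens X} (F : (Opens X)ᵒᵖ ⥤ ModuleCat.{0} ℚ)
    (s : F.obj (op U)) {V : Opens X} (h : V ≤ U) :
    (toHom F s).app (op V) (gen h) = F.map (homOfLE h).op s := by
  exact ModuleCat.freeDesc_apply _ _

lemma PP_all {X : TopCat.{0}} {U V : Opens X} (h : V ≤ U) (p : (PP U).obj (op V)) :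
    ∃ c : ℚ, p = c • gen h := by
  refine ⟨(show (V ⟶ U) →₀ ℚ from p) (homOfLE h), ?_⟩
  have : ∀ q : (V ⟶ U) →₀ ℚ, q = q (homOfLE h) • Finsupp.single (homOfLE h) (1 : ℚ) := by
    intro q
    ext f
    have : f = homOfLE h := Subsingleton.elim _ _
    subst this
    simp
  exact this p

lemma PP_gen_ne {X : TopCat.{0}} {U V : Opens X} (h : V ≤ U) (c : ℚ)
    (hc : c • gen h = 0) : c = 0 := by
  have : c • Finsupp.single (homOfLE h) (1 : ℚ) = 0 := hc
  simpa using this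

lemma PP_none {X : TopCat.{0}} {U V : Opens X} (h : ¬ V ≤ U) (p : (PP U).obj (op V)) :
    p = 0 := by
  refine Finsupp.ext (M := ℚ) (fun f => (h (leOfHom f)).elim)

lemma PP_hom_ext {X : TopCat.{0}} {U : Opens X} {F : (Opens X)ᵒᵖ ⥤ ModuleCat.{0} ℚ}
    (α β : PP U ⟶ F)
    (h : α.app (op U) (gen le_rfl) = β.app (op U) (gen le_rfl)) : α = β := by
  ext1
  ext1 V
  refine ModuleCat.free_hom_ext (fun (x : V.unop ⟶ U) => ?_)
  have h1 : ModuleCat.freeMk (R := ℚ) x = (PP U).map x.op (gen le_rfl) := by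
    exact (ModuleCat.free_map_apply (R := ℚ) ((yoneda.obj U).map x.op) (homOfLE (le_refl U))).symm
  have h2 : ∀ γ : PP U ⟶ F, γ.app V ((PP U).map x.op (gen le_rfl)) =
      F.map x.op (γ.app (op U) (gen le_rfl)) := by
    intro γ
    rw [← ConcreteCategory.comp_apply, ← ConcreteCategory.comp_apply]
    exact congrArg (fun t : (PP U).obj (op U) ⟶ F.obj V => t (gen le_rfl)) (γ.naturality x.op)
  refine (congrArg _ h1).trans (Eq.trans ?_ (congrArg _ h1.symm))
  rw [h2, h2, h]

instance PP_mono {X : TopCat.{0}} {U V : Opens X} (h : U ≤ V) : Mono (toHom (PP V) (gen h)) := by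
  have : ∀ W, Mono ((toHom (PP V) (gen h)).app W) := by
    intro W
    induction W using Opposite.rec with | _ W => ?_
    rw [ModuleCat.mono_iff_injective]
    refine (injective_iff_map_eq_zero ((toHom (PP V) (gen h)).app (op W)).hom).2 ?_
    intro p hp
    by_cases hW : W ≤ U
    · obtain ⟨c, rfl⟩ := PP_all hW p
      rw [map_smul] at hp
      have h1 := toHom_gen (PP V) (gen h) hW
      rw [PP_map] at h1
      have h2 : c • gen (hW.trans h) = 0 := by rw [← hp, ← h1]
      rw [PP_gen_ne _ _ h2, zero_smul]
    · exact PP_none hW p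
  exact NatTrans.mono_of_mono_app _

lemma inj_flasque {X : TopCat.{0}} (I : SX X) (hI : Injective I) {U V : Opens X} (h : U ≤ V) :
    Function.Surjective (res I h) := by
  intro s
  let J := Opens.grothendieckTopology X
  let adj := sheafificationAdjunction J (ModuleCat.{0} ℚ)
  let m := (presheafToSheaf J (ModuleCat.{0} ℚ)).map (toHom (PP V) (gen h))
  have hm : Mono m := inferInstance
  let a : (presheafToSheaf J (ModuleCat.{0} ℚ)).obj (PP U) ⟶ I := (adj.homEquiv _ _).symm (toHom I.obj s)
  let b := Injective.factorThru a m
  have hb : m ≫ b = a := Injective.comp_factorThru a m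
  let c := adj.homEquiv _ _ b
  have hc : toHom (PP V) (gen h) ≫ c = toHom I.obj s := by
    rw [← adj.homEquiv_naturality_left, hb]
    exact Equiv.apply_symm_apply _ _
  refine ⟨c.app (op V) (gen le_rfl), ?_⟩
  have h1 := congrArg (fun t : PP U ⟶ I.obj => t.app (op U) (gen le_rfl)) hc
  have h2 := toHom_gen I.obj s (le_refl U)
  have h3 : I.obj.map (homOfLE (le_refl U)).op s = s := res_self I le_rfl s
  rw [h3] at h2
  refine Eq.trans ?_ (h1.trans h2)
  have h4 := toHom_gen (PP V) (gen h) (le_refl U)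
  rw [PP_map] at h4
  refine Eq.trans ?_ (congrArg (fun t => c.app (op U) t) h4).symm
  rw [← PP_map le_rfl h]
  exact congrArg (fun t : (PP V).obj (op V) ⟶ I.obj.obj (op U) => t (gen le_rfl)) (c.naturality (homOfLE h).op).symm


lemma extend_lift {X : TopCat.{0}} {S : ShortComplex (SX X)} (hS : S.ShortExact)
    {A B C V : Opens X} (hA : A ≤ V) (hB : B ≤ V) (hCA : C ≤ A) (hCB : C ≤ B)
    (hF : Function.Surjective (res S.X₁ hCB)) (q : Sec S.X₃ V)
    (t : Sec S.X₂ A) (ht : sm S.g A t = res S.X₃ hA q)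
    (u : Sec S.X₂ B) (hu : sm S.g B u = res S.X₃ hB q) :
    ∃ w : Sec S.X₂ B, sm S.g B w = res S.X₃ hB q ∧ res S.X₂ hCB w = res S.X₂ hCA t := by
  obtain ⟨d, hd⟩ := secexact hS C (res S.X₂ hCA t - res S.X₂ hCB u) (by
    rw [map_sub, sm_res, sm_res, ht, hu, res_res, res_res, sub_self])
  obtain ⟨e, he⟩ := hF d
  refine ⟨u + sm S.f B e, ?_, ?_⟩
  · rw [map_add, hu, ← sm_comp, S.zero]
    exact add_zero _
  · rw [map_add, ← sm_res, he, hd]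
    abel

lemma glue_lift {X : TopCat.{0}} {S : ShortComplex (SX X)} (hS : S.ShortExact)
    {A B C D V : Opens X} (hA : A ≤ D) (hB : B ≤ D) (hCA : C ≤ A) (hCB : C ≤ B)
    (hD : D ≤ V) (hDc : D ≤ A ⊔ B) (hC : A ⊓ B ≤ C)
    (hF : Function.Surjective (res S.X₁ hCB)) (q : Sec S.X₃ V)
    (ht : ∃ t : Sec S.X₂ A, sm S.g A t = res S.X₃ (hA.trans hD) q)
    (hu : ∃ u : Sec S.X₂ B, sm S.g B u = res S.X₃ (hB.trans hD) q) :
    ∃ w : Sec S.X₂ D, sm S.g D w = res S.X₃ hD q := by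
  obtain ⟨t, ht⟩ := ht
  obtain ⟨u, hu⟩ := hu
  obtain ⟨w, hw, hw2⟩ := extend_lift hS (hA.trans hD) (hB.trans hD) hCA hCB hF q t ht u hu
  obtain ⟨s, hs1, hs2⟩ := glue2 S.X₂ hA hB hDc t w (by
    have := congrArg (res S.X₂ hC) hw2
    rw [res_res, res_res] at this
    exact this.symm)
  refine ⟨s, ?_⟩
  refine sec_ext' S.X₃ D _ _ (fun x hx => ?_)
  rcases hDc hx with hx | hx
  · exact ⟨A, hA, hx, by rw [← sm_res, hs1, ht, res_res]⟩
  · exact ⟨B, hB, hx, by rw [← sm_res, hs2, hw, res_res]⟩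

lemma seq_lift {X : TopCat.{0}} {S : ShortComplex (SX X)} (hS : S.ShortExact)
    {V : Opens X} (B : ℕ → Opens X) (hB : ∀ n, B n ≤ V) (hmono : ∀ n, B n ≤ B (n + 1))
    (hc : ∀ x ∈ V, ∃ n, x ∈ B n)
    (hF : ∀ n, Function.Surjective (res S.X₁ (hmono n))) (q : Sec S.X₃ V)
    (h : ∀ n, ∃ t : Sec S.X₂ (B n), sm S.g (B n) t = res S.X₃ (hB n) q) :
    ∃ w : Sec S.X₂ V, sm S.g V w = q := by
  have step : ∀ n, ∀ t : {t : Sec S.X₂ (B n) // sm S.g (B n) t = res S.X₃ (hB n) q},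
      ∃ w : {t : Sec S.X₂ (B (n + 1)) // sm S.g (B (n + 1)) t = res S.X₃ (hB (n + 1)) q},
        res S.X₂ (hmono n) w.1 = t.1 := by
    rintro n ⟨t, ht⟩
    obtain ⟨u, hu⟩ := h (n + 1)
    obtain ⟨w, hw, hw2⟩ := extend_lift hS (hB n) (hB (n + 1)) le_rfl (hmono n) (hF n) q t ht u hu
    exact ⟨⟨w, hw⟩, by rw [hw2, res_self]⟩
  choose nx hnx using step
  let T : ∀ n, {t : Sec S.X₂ (B n) // sm S.g (B n) t = res S.X₃ (hB n) q} := fun n =>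
    Nat.rec ⟨(h 0).choose, (h 0).choose_spec⟩ (fun n t => nx n t) n
  have hT : ∀ n, res S.X₂ (hmono n) (T (n + 1)).1 = (T n).1 := fun n => hnx n (T n)
  have hm : Monotone B := monotone_nat_of_le_succ hmono
  have hT2 : ∀ n m (hnm : n ≤ m), res S.X₂ (hm hnm) (T m).1 = (T n).1 := by
    intro n m hnm
    induction m, hnm using Nat.le_induction with
    | base => exact res_self _ _ _
    | succ m hnm ih => rw [← ih, ← hT m, res_res]
  obtain ⟨s, hs⟩ := glue S.X₂ B V hB (fun x hx => Opens.mem_iSup.2 (hc x hx)) (fun n => (T n).1) (by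
    intro i j
    rcases le_total i j with hij | hij
    · rw [← hT2 i j hij, res_res]
    · rw [← hT2 j i hij, res_res])
  refine ⟨s, sec_ext S.X₃ B V hB (fun x hx => Opens.mem_iSup.2 (hc x hx)) _ _ (fun n => ?_)⟩
  rw [← sm_res, hs, (T n).2]

abbrev E3 := Fin 3 → ℝ

def bset (a b : E3) : Set E3 := Set.pi Set.univ (fun i => Set.Ioo (a i) (b i))

lemma mem_bset {a b x : E3} : x ∈ bset a b ↔ ∀ i, a i < x i ∧ x i < b i := by
  simp [bset]

lemma isOpen_bset (a b : E3) : IsOpen (bset a b) :=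
  isOpen_set_pi Set.finite_univ (fun _ _ => isOpen_Ioo)

def bx {X : TopCat.{0}} {ψ : E3 → X} (hψ : Topology.IsOpenEmbedding ψ) (a b : E3) : Opens X :=
  ⟨ψ '' bset a b, hψ.isOpenMap _ (isOpen_bset a b)⟩

lemma bx_le {X : TopCat.{0}} {ψ : E3 → X} (hψ : Topology.IsOpenEmbedding ψ) {a b a' b' : E3}
    (h : a' ≤ a) (hb : b ≤ b') : bx hψ a b ≤ bx hψ a' b' := by
  refine Set.image_mono ?_
  intro x hx
  rw [mem_bset] at *
  exact fun i => ⟨(h i).trans_lt (hx i).1, (hx i).2.trans_le (hb i)⟩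

/-- flasque on boxes -/
def BF {X : TopCat.{0}} {ψ : E3 → X} (hψ : Topology.IsOpenEmbedding ψ) (F : SX X) : Prop :=
  ∀ a b a' b' : E3, (∀ i, a i < b i) → ∀ (h : a' ≤ a) (h' : b ≤ b'),
    Function.Surjective (res F (bx_le hψ h h'))

lemma one_dim (P : ℝ → ℝ → Prop) (A B δ : ℝ) (hδ : 0 < δ)
    (hs : ∀ a b, A ≤ a → b ≤ B → a < b → b - a < δ → P a b)
    (hg : ∀ a b c d, A ≤ a → d ≤ B → a ≤ c → c < b → b ≤ d → P a b → P c d → P a d) :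
    ∀ a b, A ≤ a → b ≤ B → a < b → P a b := by
  have key : ∀ n : ℕ, ∀ a b, A ≤ a → b ≤ B → a < b → b - a < (n + 1) * (δ / 2) → P a b := by
    intro n
    induction n with
    | zero => intro a b h1 h2 h3 h4; exact hs a b h1 h2 h3 (by norm_num at h4; linarith)
    | succ n ih =>
      intro a b h1 h2 h3 h4
      push_cast at h4
      by_cases hsm : b - a < δ
      · exact hs a b h1 h2 h3 hsm
      · refine hg a (b - δ / 2) (b - 3 * δ / 4) b h1 h2 (by linarith) (by linarith) (by linarith)
          (ih a (b - δ / 2) h1 (by linarith) (by linarith) (by linarith))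
          (hs _ _ (by linarith) h2 (by linarith) (by linarith))
  intro a b h1 h2 h3
  obtain ⟨n, hn⟩ := exists_nat_gt ((b - a) / (δ / 2))
  refine key n a b h1 h2 h3 ?_
  rw [div_lt_iff₀ (by positivity)] at hn
  nlinarith

/-- gluing in the coordinate `i` -/
lemma coord_glue {X : TopCat.{0}} {ψ : E3 → X} (hψ : Topology.IsOpenEmbedding ψ)
    {S : ShortComplex (SX X)} (hS : S.ShortExact) (hF : BF hψ S.X₁) {V : Opens X} (q : Sec S.X₃ V)
    (P : E3 → E3 → Prop)
    (hP : ∀ a b, P a b ↔ ∃ (h : bx hψ a b ≤ V) (t : Sec S.X₂ (bx hψ a b)), 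
      sm S.g _ t = res S.X₃ h q)
    (i : Fin 3) (u v : E3) (huv : ∀ j, u j < v j) (a b c d : ℝ) (hac : a ≤ c) (hcb : c < b)
    (hbd : b ≤ d)
    (h1 : P (Function.update u i a) (Function.update v i b))
    (h2 : P (Function.update u i c) (Function.update v i d)) :
    P (Function.update u i a) (Function.update v i d) := by
  rw [hP] at *
  obtain ⟨hV1, h1⟩ := h1
  obtain ⟨hV2, h2⟩ := h2
  have hcov : bx hψ (Function.update u i a) (Function.update v i d) ≤
      bx hψ (Function.update u i a) (Function.update v i b) ⊔ 
      bx hψ (Function.update u i c) (Function.update v i d) := by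
    rintro _ ⟨x, hx, rfl⟩
    rw [mem_bset] at hx
    have hxi := hx i
    simp only [Function.update_self] at hxi
    by_cases hxb : x i < b
    · left
      refine ⟨x, mem_bset.2 fun j => ?_, rfl⟩
      have := hx j
      by_cases hj : j = i
      · subst hj; simp only [Function.update_self] at *; exact ⟨this.1, hxb⟩
      · simpa only [Function.update_of_ne hj] using this
    · right
      refine ⟨x, mem_bset.2 fun j => ?_, rfl⟩
      have := hx j
      by_cases hj : j = i
      · subst hj; simp only [Function.update_self] at *; exact ⟨by linarith, this.2⟩
      · simpa only [Function.update_of_ne hj] using this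
  have hle : ∀ (w : E3) (s t : ℝ), s ≤ t → Function.update w i s ≤ Function.update w i t := 
    fun w s t hst => update_le_update_iff.2 ⟨hst, fun _ _ => le_rfl⟩
  refine ⟨hcov.trans (sup_le hV1 hV2), ?_⟩
  refine glue_lift hS (C := bx hψ (Function.update u i c) (Function.update v i b))
    (bx_le hψ le_rfl (hle _ _ _ hbd)) (bx_le hψ (hle _ _ _ hac) le_rfl)
    (bx_le hψ (hle _ _ _ hac) le_rfl) (bx_le hψ le_rfl (hle _ _ _ hbd)) _ hcov ?_ (hF _ _ _ _ ?_ le_rfl (hle _ _ _ hbd))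
    q h1 h2
  · rintro _ ⟨⟨x, hx, rfl⟩, ⟨y, hy, hxy⟩⟩
    obtain rfl := hψ.injective hxy
    refine ⟨y, mem_bset.2 fun j => ?_, rfl⟩
    have h1 := mem_bset.1 hx j
    have h2 := mem_bset.1 hy j
    by_cases hj : j = i
    · subst hj; simp only [Function.update_self] at *; exact ⟨h2.1, h1.2⟩
    · simp only [Function.update_of_ne hj] at *; exact h1
  · intro j
    by_cases hj : j = i
    · subst hj; simpa using hcb
    · simpa only [Function.update_of_ne hj] using huv j

lemma compact_lift {X : TopCat.{0}} {ψ : E3 → X} (hψ : Topology.IsOpenEmbedding ψ)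
    {S : ShortComplex (SX X)} (hS : S.ShortExact) (hF : BF hψ S.X₁) {V : Opens X} (q : Sec S.X₃ V)
    (A B : E3) (hAB : ∀ i, A i < B i) (hV : ∀ x ∈ Set.Icc A B, ψ x ∈ V) :
    ∃ (h : bx hψ A B ≤ V) (t : Sec S.X₂ (bx hψ A B)), sm S.g _ t = res S.X₃ h q := by
  let P : E3 → E3 → Prop := fun a b => ∃ (h : bx hψ a b ≤ V) (t : Sec S.X₂ (bx hψ a b)), 
      sm S.g _ t = res S.X₃ h q
  have hP : ∀ a b, P a b ↔ ∃ (h : bx hψ a b ≤ V) (t : Sec S.X₂ (bx hψ a b)), 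
      sm S.g _ t = res S.X₃ h q := fun _ _ => Iff.rfl
  -- Lebesgue number
  have loc : ∀ x ∈ Set.Icc A B, ∃ O : Set E3, IsOpen O ∧ x ∈ O ∧ 
      ∀ a b, bset a b ⊆ O → P a b := by
    intro x hx
    obtain ⟨W, hW, t, hxW, ht⟩ := locsurj S.g hS.epi_g V q (ψ x) (hV x hx)
    refine ⟨ψ ⁻¹' W, W.isOpen.preimage hψ.continuous, hxW, fun a b hab => ?_⟩
    have hle : bx hψ a b ≤ W := by
      rintro _ ⟨y, hy, rfl⟩
      exact hab hy
    exact ⟨hle.trans hW, res S.X₂ hle t, by rw [sm_res, ht, res_res]⟩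
  choose! O hO hxO hOP using loc
  obtain ⟨δ, hδ, hδ2⟩ := lebesgue_number_lemma_of_metric (isCompact_Icc (a := A) (b := B))
    (c := fun x : Set.Icc A B => O x.1) (fun x => hO x.1 x.2) 
    (fun x hx => Set.mem_iUnion.2 ⟨⟨x, hx⟩, hxO x hx⟩)
  have small : ∀ a b : E3, A ≤ a → b ≤ B → (∀ i, a i < b i) → (∀ i, b i - a i < δ) → P a b := by
    intro a b h1 h2 h3 h4
    obtain ⟨x, hx⟩ := hδ2 a ⟨h1, fun i => (h3 i).le.trans (h2 i)⟩
    refine hOP x.1 x.2 a b (subset_trans ?_ hx)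
    intro y hy
    rw [mem_bset] at hy
    rw [Metric.mem_ball, dist_pi_lt_iff hδ]
    intro i
    rw [Real.dist_eq, abs_of_pos (by linarith [(hy i).1])]
    linarith [(hy i).2, h4 i]
  have step : ∀ (i : Fin 3) (sm : Finset (Fin 3)), i ∈ sm → 
     (∀ a b : E3, A ≤ a → b ≤ B → (∀ i, a i < b i) → (∀ i ∈ sm, b i - a i < δ) → P a b) →
     (∀ a b : E3, A ≤ a → b ≤ B → (∀ i, a i < b i) → (∀ j ∈ sm.erase i, b j - a j < δ) → P a b) := by
    intro i sm his H a b hA hB hab hsm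
    have := one_dim (fun s t => P (Function.update a i s) (Function.update b i t)) (A i) (B i) δ hδ
      (fun s t h1 h2 h3 h4 => by
        refine H _ _ ?_ ?_ ?_ ?_
        · exact le_update_iff.2 ⟨h1, fun j _ => hA j⟩
        · exact update_le_iff.2 ⟨h2, fun j _ => hB j⟩
        · intro j
          by_cases hj : j = i
          · subst hj; simpa using h3
          · simpa only [Function.update_of_ne hj] using hab j
        · intro j hjs
          by_cases hj : j = i
          · subst hj; simpa using h4
          · simpa only [Function.update_of_ne hj] using hsm j (Finset.mem_erase.2 ⟨hj, hjs⟩))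
      (fun s t u v _ _ h1 h2 h3 h4 h5 => 
        coord_glue hψ hS hF q P hP i a b hab s t u v h1 h2 h3 h4 h5)
      (a i) (b i) (hA i) (hB i) (hab i)
    simpa only [Function.update_eq_self] using this
  have s1 := step 0 Finset.univ (Finset.mem_univ _) (fun a b h1 h2 h3 h4 => 
    small a b h1 h2 h3 (fun i => h4 i (Finset.mem_univ _)))
  have s2 := step 1 (Finset.univ.erase 0) (by simp) s1
  have s3 := step 2 ((Finset.univ.erase 0).erase 1) (by simp) s2
  exact s3 A B le_rfl le_rfl hAB (by
    intro j hj
    revert hj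
    fin_cases j <;> simp)

lemma box_surj {X : TopCat.{0}} {ψ : E3 → X} (hψ : Topology.IsOpenEmbedding ψ)
    {S : ShortComplex (SX X)} (hS : S.ShortExact) (hF : BF hψ S.X₁) (a b : E3)
    (hab : ∀ i, a i < b i) : Function.Surjective (sm S.g (bx hψ a b)) := by
  intro q
  have hpos : ∀ n : ℕ, (0 : ℝ) < 1 / (n + 3) := fun n => by positivity
  have hlt : ∀ n : ℕ, (1 : ℝ) / (n + 3) < 1 / 2 := fun n => by
    rw [div_lt_div_iff₀ (by positivity) (by positivity)]; 
    have : (0 : ℝ) ≤ n := n.cast_nonneg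
    linarith
  have hdec : ∀ n : ℕ, (1 : ℝ) / ((n + 1 : ℕ) + 3) ≤ 1 / (n + 3) := fun n => by
    apply one_div_le_one_div_of_le (by positivity); push_cast; linarith
  let α : ℕ → E3 := fun n i => a i + (1 / (n + 3)) * (b i - a i)
  let β : ℕ → E3 := fun n i => b i - (1 / (n + 3)) * (b i - a i)
  have hα : ∀ n, a ≤ α n := fun n i => by
    have := mul_pos (hpos n) (sub_pos.2 (hab i)); simp only [α]; linarith
  have hβ : ∀ n, β n ≤ b := fun n i => by
    have := mul_pos (hpos n) (sub_pos.2 (hab i)); simp only [β]; linarith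
  have hαβ : ∀ n i, α n i < β n i := fun n i => by
    have := mul_lt_mul_of_pos_right (hlt n) (sub_pos.2 (hab i)); simp only [α, β]; linarith
  have hα' : ∀ n, α (n + 1) ≤ α n := fun n i => by
    have := mul_le_mul_of_nonneg_right (hdec n) (sub_pos.2 (hab i)).le; simp only [α]; linarith
  have hβ' : ∀ n, β n ≤ β (n + 1) := fun n i => by
    have := mul_le_mul_of_nonneg_right (hdec n) (sub_pos.2 (hab i)).le; simp only [β]; linarith
  refine seq_lift hS (fun n => bx hψ (α n) (β n)) (fun n => bx_le hψ (hα n) (hβ n)) 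
    (fun n => bx_le hψ (hα' n) (hβ' n)) ?_ (fun n => hF _ _ _ _ (hαβ n) (hα' n) (hβ' n)) q ?_
  · rintro _ ⟨x, hx, rfl⟩
    have hx := mem_bset.1 hx
    have ev : ∀ᶠ n : ℕ in Filter.atTop, ∀ i, α n i < x i ∧ x i < β n i := by
      rw [Filter.eventually_all]
      intro i
      have lim : Filter.Tendsto (fun n : ℕ => (1 : ℝ) / (n + 3)) Filter.atTop (nhds 0) := by
        have := tendsto_one_div_add_atTop_nhds_zero_nat (𝕜 := ℝ)
        have := (Filter.tendsto_add_atTop_iff_nat 2).2 this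
        refine this.congr (fun n => ?_)
        push_cast; ring
      have l1 : Filter.Tendsto (fun n => α n i) Filter.atTop (nhds (a i)) := by
        simpa [α] using (lim.mul_const (b i - a i)).const_add (a i)
      have l2 : Filter.Tendsto (fun n => β n i) Filter.atTop (nhds (b i)) := by
        simpa [β] using (lim.mul_const (b i - a i)).const_sub (b i)
      exact (l1.eventually_lt_const (hx i).1).and (l2.eventually_const_lt (hx i).2)
    obtain ⟨n, hn⟩ := ev.exists
    exact ⟨n, x, mem_bset.2 hn, rfl⟩
  · intro n
    obtain ⟨h, t, ht⟩ := compact_lift hψ hS hF q (α n) (β n) (hαβ n) (by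
      intro x hx
      refine ⟨x, mem_bset.2 fun i => ⟨?_, ?_⟩, rfl⟩
      · refine lt_of_lt_of_le ?_ (hx.1 i)
        have := mul_pos (hpos n) (sub_pos.2 (hab i)); simp only [α]; linarith
      · refine lt_of_le_of_lt (hx.2 i) ?_
        have := mul_pos (hpos n) (sub_pos.2 (hab i)); simp only [β]; linarith)
    exact ⟨t, ht⟩

lemma full_surj {X : TopCat.{0}} {ψ : E3 → X} (hψ : Topology.IsOpenEmbedding ψ)
    {S : ShortComplex (SX X)} (hS : S.ShortExact) (hF : BF hψ S.X₁) (V : Opens X)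
    (hV : (V : Set X) = Set.range ψ) : Function.Surjective (sm S.g V) := by
  intro q
  have hV1 : ∀ x, ψ x ∈ V := fun x => by
    change ψ x ∈ (V : Set X)
    rw [hV]; exact ⟨x, rfl⟩
  have hle : ∀ a b, bx hψ a b ≤ V := by
    rintro a b _ ⟨x, hx, rfl⟩
    exact hV1 x
  have hn : ∀ n : ℕ, (0 : ℝ) ≤ n := fun n => n.cast_nonneg
  have hl1 : ∀ n : ℕ, (fun _ => -(((n + 1 : ℕ) : ℝ) + 1) : E3) ≤ (fun _ => -((n : ℝ) + 1)) :=
    fun n i => by push_cast; linarith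
  have hl2 : ∀ n : ℕ, (fun _ => ((n : ℝ) + 1) : E3) ≤ (fun _ => (((n + 1 : ℕ) : ℝ) + 1)) :=
    fun n i => by push_cast; linarith
  refine seq_lift hS (fun n => bx hψ (fun _ => -(n + 1 : ℝ)) (fun _ => (n + 1 : ℝ))) (fun n => hle _ _) 
    (fun n => bx_le hψ (hl1 n) (hl2 n)) ?_
    (fun n => hF _ _ _ _ (fun i => by linarith [hn n]) (hl1 n) (hl2 n)) q ?_
  · intro y hy
    have : y ∈ (V : Set X) := hy
    rw [hV] at this
    obtain ⟨x, rfl⟩ := this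
    obtain ⟨n, hn⟩ := exists_nat_gt ‖x‖
    refine ⟨n, x, mem_bset.2 fun i => ?_, rfl⟩
    have h1 := norm_le_pi_norm x i
    have := abs_lt.1 ((h1.trans_lt hn).trans (lt_add_one _))
    exact this
  · intro n
    obtain ⟨h, t, ht⟩ := compact_lift hψ hS hF q (fun _ => -(n + 1 : ℝ)) (fun _ => (n + 1 : ℝ)) 
      (fun i => by linarith [hn n]) (fun x _ => hV1 x)
    exact ⟨t, ht⟩

lemma BF_quot {X : TopCat.{0}} {ψ : E3 → X} (hψ : Topology.IsOpenEmbedding ψ)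
    {S : ShortComplex (SX X)} (hS : S.ShortExact) (hF : BF hψ S.X₁) (hI : Injective S.X₂) :
    BF hψ S.X₃ := by
  intro a b a' b' hab h h' s
  obtain ⟨t, rfl⟩ := box_surj hψ hS hF a b hab s
  obtain ⟨u, rfl⟩ := inj_flasque S.X₂ hI (bx_le hψ h h') t
  exact ⟨sm S.g _ u, (sm_res _ _ _).symm⟩


lemma W_ext {X : TopCat.{0}} {P : (Opens X)ᵒᵖ ⥤ ModuleCat.{0} ℚ} {K : SX X} (κ : P ⟶ K.obj)
    (h1 : ∀ (V : Opens X) (p : P.obj (op V)), κ.app (op V) p = 0 → ∀ x ∈ V,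
      ∃ (W : Opens X) (hW : W ≤ V), x ∈ W ∧ P.map (homOfLE hW).op p = 0)
    (h2 : ∀ (V : Opens X) (s : Sec K V), ∀ x ∈ V,
      ∃ (W : Opens X) (hW : W ≤ V) (p : P.obj (op W)), x ∈ W ∧ κ.app (op W) p = res K hW s) :
    (Opens.grothendieckTopology X).W κ := by
  have i1 : Presheaf.IsLocallyInjective (Opens.grothendieckTopology X) κ := by
    constructor
    intro V p q hpq x hx
    induction V using Opposite.rec with | _ V => ?_
    obtain ⟨W, hW, hxW, he⟩ := h1 V (p - q) (by
      have : (κ.app (op V)).hom (p - q) = 0 := by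
        rw [map_sub]; exact sub_eq_zero.2 hpq
      exact this) x hx
    refine ⟨W, homOfLE hW, ?_, hxW⟩
    have he : (P.map (homOfLE hW).op).hom (p - q) = 0 := he
    rw [map_sub] at he
    exact sub_eq_zero.1 he
  have i2 : Presheaf.IsLocallySurjective (Opens.grothendieckTopology X) κ := by
    constructor
    intro V s x hx
    obtain ⟨W, hW, p, hxW, he⟩ := h2 V s x hx
    exact ⟨W, homOfLE hW, ⟨p, he⟩, hxW⟩
  exact (Opens.grothendieckTopology X).W_of_isLocallyBijective κ

def cst (V : Opens GTop) (c : ℚ) : Sec QG V :=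
  ((toSheafify (Opens.grothendieckTopology GTop)
    ((Functor.const _).obj (ModuleCat.of ℚ ℚ))).app (op V)).hom c

lemma cst_smul (V : Opens GTop) (c d : ℚ) : cst V (c * d) = c • cst V d := by
  unfold cst
  exact map_smul _ c (d : ModuleCat.of ℚ ℚ)

lemma res_cst {V W : Opens GTop} (h : W ≤ V) (c : ℚ) : res QG h (cst V c) = cst W c := by
  have := (toSheafify (Opens.grothendieckTopology GTop)
    ((Functor.const _).obj (ModuleCat.of ℚ ℚ))).naturality (homOfLE h).op
  exact (congrArg (fun t => t.hom c) this).symm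

lemma cst_loc (V : Opens GTop) (s : Sec QG V) (x : GTop) (hx : x ∈ V) :
    ∃ (W : Opens GTop) (hW : W ≤ V) (c : ℚ), x ∈ W ∧ cst W c = res QG hW s := by
  have := Presheaf.imageSieve_mem (Opens.grothendieckTopology GTop) (toSheafify (Opens.grothendieckTopology GTop)
    ((Functor.const _).obj (ModuleCat.of ℚ ℚ))) s
  obtain ⟨W, f, ⟨c, hc⟩, hxW⟩ := this x hx
  exact ⟨W, leOfHom f, c, hxW, hc⟩

lemma cst_inj (V : Opens GTop) (x : GTop) (hx : x ∈ V) (c : ℚ) (h : cst V c = 0) : c = 0 := by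
  have := Presheaf.equalizerSieve_mem (Opens.grothendieckTopology GTop) (toSheafify (Opens.grothendieckTopology GTop)
    ((Functor.const _).obj (ModuleCat.of ℚ ℚ))) (X := op V) c 0 (by
      refine Eq.trans h ?_
      exact (map_zero ((toSheafify (Opens.grothendieckTopology GTop)
        ((Functor.const _).obj (ModuleCat.of ℚ ℚ))).app (op V)).hom).symm)
  obtain ⟨W, f, hc, hxW⟩ := this x hx
  exact hc

def skS : ShG := (skyscraperSheafFunctor (C := ModuleCat.{0} ℚ) (X := GTop) (1 : SU2)).obj
  (TopCat.Presheaf.stalk (C := ModuleCat.{0} ℚ) (X := GTop) QG.obj (1 : SU2))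

def uQ : QG ⟶ skS := unitQG

lemma unit_notMem (V : Opens GTop) (h : (1 : SU2) ∉ V) (s : Sec QG V) : sm uQ V s = 0 := by
  unfold sm
  have h1 : uQ.hom.app (op V) = 0 :=
    IsTerminal.hom_ext ((if_neg h).symm.ndrec terminalIsTerminal) _ _
  rw [h1]; rfl

lemma unit_mem (V : Opens GTop) (h : (1 : SU2) ∈ V) (s : Sec QG V) (hs : sm uQ V s = 0) :
    ∃ (W : Opens GTop) (hW : W ≤ V), (1 : SU2) ∈ W ∧ res QG hW s = 0 := by
  have h0 : skS.obj.obj (op V) = TopCat.Presheaf.stalk (C := ModuleCat.{0} ℚ) (X := GTop) QG.obj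
    (1 : SU2) := if_pos h
  have h1 : uQ.hom.app (op V) =
      TopCat.Presheaf.germ (X := GTop) QG.obj V (1 : SU2) h ≫ 𝟙 _ ≫ eqToHom h0.symm :=
    dif_pos h
  have h3 : TopCat.Presheaf.germ (X := GTop) QG.obj V (1 : SU2) h =
      uQ.hom.app (op V) ≫ eqToHom h0 := by
    rw [h1, Category.id_comp, Category.assoc, eqToHom_trans, eqToHom_refl, Category.comp_id]
  have h2 : (TopCat.Presheaf.germ (X := GTop) QG.obj V (1 : SU2) h).hom s = 0 := by
    rw [h3]
    refine (congrArg (eqToHom h0).hom hs).trans (map_zero _)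
  have h4 : (TopCat.Presheaf.germ (X := GTop) QG.obj V (1 : SU2) h) s =
     (TopCat.Presheaf.germ (X := GTop) QG.obj V (1 : SU2) h) (0 : Sec QG V) := by
    refine Eq.trans h2 (map_zero (TopCat.Presheaf.germ (X := GTop) QG.obj V (1 : SU2) h).hom).symm
  obtain ⟨W, hW, i, j, e⟩ := TopCat.Presheaf.germ_eq (X := GTop) QG.obj (1 : SU2) h h s 0 h4
  refine ⟨W, leOfHom i, hW, Eq.trans e ?_⟩
  exact map_zero (QG.obj.map j.op).hom

def iK : KK ⟶ QG := kernel.ι uQ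

instance iK_mono : Mono iK := inferInstanceAs (Mono (kernel.ι uQ))

lemma iK_zero (V : Opens GTop) (t : Sec KK V) : sm uQ V (sm iK V t) = 0 := by
  rw [← sm_comp]
  have : iK ≫ uQ = 0 := kernel.condition _
  rw [this]; rfl

lemma iK_ex (V : Opens GTop) (s : Sec QG V) (h : sm uQ V s = 0) : ∃ t, sm iK V t = s := by
  let Φ : SX GTop ⥤ ModuleCat.{0} ℚ := sheafToPresheaf _ _ ⋙ (evaluation _ _).obj (op V)
  have : PreservesFiniteLimits Φ := by dsimp only [Φ]; infer_instance
  have : Φ.Additive := by dsimp only [Φ]; infer_instance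
  let S : ShortComplex (SX GTop) := ShortComplex.mk (kernel.ι uQ) uQ (kernel.condition _)
  have hS : S.Exact := ShortComplex.exact_of_f_is_kernel _ (kernelIsKernel uQ)
  have h2 := (S.map Φ).moduleCat_exact_iff.1 
    (((Functor.preservesFiniteLimits_tfae Φ).out 1 3 rfl rfl).mpr inferInstance S
      ⟨hS, inferInstanceAs (Mono (kernel.ι uQ))⟩).1
  exact h2 s h

def UU : Opens GTop := ⟨{(1 : SU2)}ᶜ, isOpen_compl_singleton⟩

lemma notMem_UU {V : Opens GTop} (h : V ≤ UU) : (1 : SU2) ∉ V := fun h1 => h h1 rfl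

def oneK : Sec KK UU := (iK_ex UU (cst UU 1) (unit_notMem _ (notMem_UU le_rfl) _)).choose

lemma iK_oneK : sm iK UU oneK = cst UU 1 :=
  (iK_ex UU (cst UU 1) (unit_notMem _ (notMem_UU le_rfl) _)).choose_spec

lemma iK_res {V : Opens GTop} (h : V ≤ UU) (c : ℚ) : sm iK V (c • res KK h oneK) = cst V c := by
  rw [map_smul, sm_res, iK_oneK, res_cst, ← cst_smul, mul_one]

lemma K_uniq {V : Opens GTop} (h : V ≤ UU) (x : GTop) (hx : x ∈ V) (c : ℚ)
    (hc : c • res KK h oneK = 0) : c = 0 := by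
  refine cst_inj V x hx c ?_
  rw [← iK_res h, hc, map_zero]

lemma K_loc (V : Opens GTop) (s : Sec KK V) (x : GTop) (hx : x ∈ V) (hx1 : x ∈ UU) :
    ∃ (W : Opens GTop) (hW : W ≤ V) (hWU : W ≤ UU) (c : ℚ), x ∈ W ∧ c • res KK hWU oneK = res KK hW s := by
  obtain ⟨W, hW, c, hxW, he⟩ := cst_loc V (sm iK V s) x hx
  refine ⟨W ⊓ UU, inf_le_left.trans hW, inf_le_right, c, ⟨hxW, hx1⟩, ?_⟩
  refine secinj iK inferInstance _ ?_
  rw [iK_res, sm_res, ← res_res QG hW inf_le_left, ← he, res_cst]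

lemma K_loc1 (V : Opens GTop) (s : Sec KK V) (hx : (1 : SU2) ∈ V) :
    ∃ (W : Opens GTop) (hW : W ≤ V), (1 : SU2) ∈ W ∧ res KK hW s = 0 := by
  obtain ⟨W, hW, h1, he⟩ := unit_mem V hx (sm iK V s) (iK_zero V s)
  refine ⟨W, hW, h1, secinj iK inferInstance _ ?_⟩
  rw [sm_res, he, map_zero]

lemma toHom_res {F : SX GTop} {V W : Opens GTop} (s : Sec F W) (h : V ≤ W) (c : ℚ) :
    (toHom F.obj s).app (op V) (c • gen h) = c • res F h s := by
  refine Eq.trans (map_smul ((toHom F.obj s).app (op V)).hom c (gen h)) ?_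
  exact congrArg _ (toHom_gen F.obj s h)

lemma W_K : (Opens.grothendieckTopology GTop).W (toHom KK.obj oneK) := by
  refine W_ext _ ?_ ?_
  · intro V p hp x hx
    refine ⟨V, le_rfl, hx, ?_⟩
    have : p = 0 := by
      by_cases hV : V ≤ UU
      · obtain ⟨c, rfl⟩ := PP_all hV p
        rw [toHom_res] at hp
        rw [K_uniq hV x hx c hp, zero_smul]
      · exact PP_none hV p
    rw [this]
    exact map_zero ((PP UU).map _).hom
  · intro V s x hx
    by_cases hx1 : x ∈ UU
    · obtain ⟨W, hW, hWU, c, hxW, he⟩ := K_loc V s x hx hx1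
      exact ⟨W, hW, c • gen hWU, hxW, by rw [toHom_res, he]⟩
    · have : x = (1 : SU2) := by
        by_contra h; exact hx1 h
      subst this
      obtain ⟨W, hW, hxW, he⟩ := K_loc1 V s hx
      exact ⟨W, hW, 0, hxW, by rw [he]; exact map_zero ((toHom KK.obj oneK).app (op W)).hom⟩

lemma K_hom (F : ShG) (s : Sec F UU) : ∃ φ : KK ⟶ F, sm φ UU oneK = s := by
  obtain ⟨φ, hφ⟩ := (W_K F.obj F.property).2 (toHom F.obj s)
  refine ⟨⟨φ⟩, ?_⟩
  have h1 := toHom_res (F := KK) oneK le_rfl 1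
  have h2 := toHom_res (F := F) s le_rfl 1
  rw [one_smul, one_smul, res_self] at h1 h2
  rw [← hφ] at h2
  refine Eq.trans ?_ h2
  exact congrArg (φ.app (op UU)).hom h1.symm

lemma K_hom_ext {F : ShG} (φ φ' : KK ⟶ F) (h : sm φ UU oneK = sm φ' UU oneK) : φ = φ' := by
  refine Sheaf.hom_ext ((W_K F.obj F.property).1 ?_)
  refine PP_hom_ext _ _ ?_
  have h1 := toHom_res (F := KK) oneK le_rfl 1
  rw [one_smul, one_smul, res_self] at h1
  change φ.hom.app _ ((toHom KK.obj oneK).app (op UU) (gen le_rfl)) =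
     φ'.hom.app _ ((toHom KK.obj oneK).app (op UU) (gen le_rfl))
  rw [h1]
  exact h

lemma K_conn {V : Opens GTop} (h : V ≤ UU) (hV : IsPreconnected (V : Set GTop)) (s : Sec KK V) :
    ∃ c : ℚ, s = c • res KK h oneK := by
  rcases (V : Set GTop).eq_empty_or_nonempty with he | ⟨x0, hx0⟩
  · refine ⟨0, sec_ext' KK V _ _ (fun x hx => ?_)⟩
    have : x ∈ (V : Set GTop) := hx
    rw [he] at this
    exact this.elim
  have H : ∀ x ∈ V, ∃ c : ℚ, ∃ (W : Opens GTop) (hW : W ≤ V), x ∈ W ∧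
      res KK hW s = c • res KK (hW.trans h) oneK := by
    intro x hx
    obtain ⟨W, hW, hWU, c, hxW, he⟩ := K_loc V s x hx (h hx)
    exact ⟨c, W, hW, hxW, he.symm⟩
  choose! c W hW hxW he using H
  have hloc : ∀ x ∈ V, ∀ y ∈ W x, c y = c x := by
    intro x hx y hy
    have hy' := hW x hx hy
    have h3 : res KK (inf_le_left.trans (hW x hx) : W x ⊓ W y ≤ V) s = _ :=
      (res_res KK (hW x hx) inf_le_left s).symm.trans (congrArg _ (he x hx))
    have h4 : res KK (inf_le_right.trans (hW y hy') : W x ⊓ W y ≤ V) s = _ :=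
      (res_res KK (hW y hy') inf_le_right s).symm.trans (congrArg _ (he y hy'))
    rw [map_smul, res_res] at h3 h4
    have h5 := h4.symm.trans h3
    rw [← sub_eq_zero, ← sub_smul] at h5
    exact sub_eq_zero.1 (K_uniq (V := W x ⊓ W y) _ y ⟨hy, hxW y hy'⟩ _ h5)
  have hcont : ContinuousOn c (V : Set GTop) := by
    intro x hx
    refine ContinuousAt.continuousWithinAt ?_
    refine (continuousAt_const (y := c x)).congr ?_
    filter_upwards [(W x).isOpen.mem_nhds (hxW x hx)] with y hy
    exact (hloc x hx y hy).symm
  have hconst : ∀ x ∈ V, c x = c x0 := by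
    intro x hx
    have := hV.image c hcont
    exact this.subsingleton ⟨x, hx, rfl⟩ ⟨x0, hx0, rfl⟩
  refine ⟨c x0, sec_ext' KK V _ _ (fun x hx => ⟨W x, hW x hx, hxW x hx, ?_⟩)⟩
  rw [map_smul, res_res, he x hx, hconst x hx]


lemma bx_le_UU {ψ : E3 → GTop} (hψ : Topology.IsOpenEmbedding ψ) (hr : Set.range ψ = (UU : Set GTop))
    (a b : E3) : bx hψ a b ≤ UU := by
  rintro _ ⟨x, _, rfl⟩
  change ψ x ∈ (UU : Set GTop)
  rw [← hr]
  exact ⟨x, rfl⟩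

lemma BF_KK {ψ : E3 → GTop} (hψ : Topology.IsOpenEmbedding ψ) (hr : Set.range ψ = (UU : Set GTop)) :
    BF hψ KK := by
  intro a b a' b' hab h h' s
  have hc : IsPreconnected (bx hψ a b : Set GTop) :=
    (isPreconnected_univ_pi (fun _ => isPreconnected_Ioo)).image ψ hψ.continuous.continuousOn
  obtain ⟨c, rfl⟩ := K_conn (bx_le_UU hψ hr a b) hc s
  refine ⟨c • res KK (bx_le_UU hψ hr a' b') oneK, ?_⟩
  rw [map_smul, res_res]

lemma gen_vanish {C : Type*} [Category C] [Abelian C] [HasExt.{1} C] [EnoughInjectives C] (K : C)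
    (P : C → Prop)
    (h1 : ∀ (S : ShortComplex C), S.ShortExact → P S.X₁ → ∀ f : K ⟶ S.X₃,
      ∃ g : K ⟶ S.X₂, g ≫ S.g = f)
    (h2 : ∀ (S : ShortComplex C), S.ShortExact → P S.X₁ → Injective S.X₂ → P S.X₃) (n : ℕ) :
    ∀ F : C, P F → ∀ e : Abelian.Ext K F (n + 1), e = 0 := by
  have ex : ∀ F : C, ∃ S : ShortComplex C, S.ShortExact ∧ Injective S.X₂ ∧ S.X₁ = F := fun F =>
    ⟨ShortComplex.mk (Injective.ι F) (cokernel.π (Injective.ι F)) (cokernel.condition _),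
    { exact := ShortComplex.exact_of_g_is_cokernel _ (cokernelIsCokernel _)
      mono_f := inferInstanceAs (Mono (Injective.ι F))
      epi_g := inferInstanceAs (Epi (cokernel.π (Injective.ι F))) },
    inferInstanceAs (Injective (Injective.under F)), rfl⟩
  induction n with
  | zero =>
    intro F hF e
    obtain ⟨S, hS, hI, rfl⟩ := ex F
    obtain ⟨x, hx⟩ := Abelian.Ext.covariant_sequence_exact₁ K hS e
      (Abelian.Ext.eq_zero_of_injective _) (zero_add 1)
    obtain ⟨f, hf⟩ := (Abelian.Ext.mk₀_bijective _ _).2 x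
    obtain ⟨g, hg⟩ := h1 S hS hF f
    rw [← hx, ← hf, ← hg, ← Abelian.Ext.mk₀_comp_mk₀, Abelian.Ext.comp_assoc_of_second_deg_zero,
      hS.comp_extClass, Abelian.Ext.comp_zero]
  | succ n ih =>
    intro F hF e
    obtain ⟨S, hS, hI, rfl⟩ := ex F
    obtain ⟨x, hx⟩ := Abelian.Ext.covariant_sequence_exact₁ K hS e
      (Abelian.Ext.eq_zero_of_injective _) rfl
    rw [← hx, ih S.X₃ (h2 S hS hF hI) x, Abelian.Ext.zero_comp]

lemma gen_subsing {C : Type*} [Category C] [Abelian C] [HasExt.{1} C] [EnoughInjectives C] (K : C)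
    (P : C → Prop)
    (h1 : ∀ (S : ShortComplex C), S.ShortExact → P S.X₁ → ∀ f : K ⟶ S.X₃,
      ∃ g : K ⟶ S.X₂, g ≫ S.g = f)
    (h2 : ∀ (S : ShortComplex C), S.ShortExact → P S.X₁ → Injective S.X₂ → P S.X₃)
    (hK : P K) (n : ℕ) (hn : n ≠ 0) : Subsingleton (Abelian.Ext K K n) := by
  obtain ⟨m, rfl⟩ := Nat.exists_eq_succ_of_ne_zero hn
  refine ⟨fun a b => ?_⟩
  rw [gen_vanish K P h1 h2 m K hK a, gen_vanish K P h1 h2 m K hK b]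

lemma hom_lift {ψ : E3 → GTop} (hψ : Topology.IsOpenEmbedding ψ)
    (hr : Set.range ψ = (UU : Set GTop)) (S : ShortComplex ShG) (hS : S.ShortExact)
    (hF : BF hψ S.X₁) (f : KK ⟶ S.X₃) : ∃ g : KK ⟶ S.X₂, g ≫ S.g = f := by
  obtain ⟨t, ht⟩ := full_surj hψ hS hF UU hr.symm (sm f UU oneK)
  obtain ⟨g, hg⟩ := K_hom S.X₂ t
  refine ⟨g, K_hom_ext _ _ ?_⟩
  exact (congrArg (sm S.g UU) hg).trans ht

lemma main_aux {ψ : E3 → GTop} (hψ : Topology.IsOpenEmbedding ψ)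
    (hr : Set.range ψ = (UU : Set GTop)) :
    (Nonempty ((Abelian.Ext KK KK 0) ≃+ ℚ)) ∧
    (∀ n : ℕ, n ≠ 0 → Subsingleton (Abelian.Ext KK KK n)) := by
  refine ⟨?_, ?_⟩
  · let Θ : (KK ⟶ KK) →+ Sec KK UU :=
      { toFun := fun φ => sm φ UU oneK
        map_zero' := rfl
        map_add' := fun _ _ => rfl }
    have hΘ : Function.Bijective Θ := ⟨fun a b h => K_hom_ext a b h, fun s => K_hom KK s⟩
    let Λ : ℚ →+ Sec KK UU :=
      { toFun := fun c => c • oneK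
        map_zero' := zero_smul _ _
        map_add' := fun a b => add_smul a b _ }
    have hΛ : Function.Bijective Λ := by
      constructor
      · rw [injective_iff_map_eq_zero]
        intro c hc
        refine K_uniq le_rfl (ψ 0) (bx_le_UU hψ hr (fun _ => -1) (fun _ => 1)
          ⟨0, mem_bset.2 fun i => by norm_num, rfl⟩) c ?_
        rw [res_self]
        exact hc
      · intro s
        have hc : IsPreconnected (UU : Set GTop) := by
          rw [← hr]
          exact isPreconnected_range hψ.continuous
        obtain ⟨c, hc⟩ := K_conn le_rfl hc s
        rw [res_self] at hc
        exact ⟨c, hc.symm⟩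
    exact ⟨Abelian.Ext.addEquiv₀.trans ((AddEquiv.ofBijective Θ hΘ).trans
      (AddEquiv.ofBijective Λ hΛ).symm)⟩
  · exact gen_subsing KK (BF hψ) (fun S hS hF f => hom_lift hψ hr S hS hF f)
      (fun S hS hF hI => BF_quot hψ hS hF hI) (BF_KK hψ hr)


/-- underlying matrix -/
def sumat (g : SU2) : Matrix (Fin 2) (Fin 2) ℂ := g.1.1

lemma mt_inj {g h : SU2} (e : sumat g = sumat h) : g = h := Subtype.ext (Subtype.ext e)

lemma mt_cont : Continuous sumat := continuous_subtype_val.comp continuous_subtype_val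

lemma mt_star (g : SU2) : star (sumat g) = (sumat g).adjugate := by
  have h1 : star (sumat g) * sumat g = 1 := Matrix.mem_unitaryGroup_iff'.1 g.1.2
  have h2 : (sumat g).det = 1 := g.2
  calc star (sumat g) = star (sumat g) * (sumat g * (sumat g).adjugate) := by
        rw [Matrix.mul_adjugate, h2, one_smul, mul_one]
    _ = (sumat g).adjugate := by rw [← mul_assoc, h1, one_mul]

lemma mt_11 (g : SU2) : sumat g 1 1 = star (sumat g 0 0) := by
  have := congrFun (congrFun (mt_star g) 0) 0
  rw [Matrix.adjugate_fin_two] at this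
  simpa [Matrix.star_apply] using this.symm

lemma mt_10 (g : SU2) : sumat g 1 0 = - star (sumat g 0 1) := by
  have := congrFun (congrFun (mt_star g) 1) 0
  rw [Matrix.adjugate_fin_two] at this
  have h : star (sumat g 0 1) = - sumat g 1 0 := by simpa [Matrix.star_apply] using this
  rw [h, neg_neg]

lemma mt_sq (g : SU2) : (sumat g 0 0).re ^ 2 + (sumat g 0 0).im ^ 2 + (sumat g 0 1).re ^ 2 +
    (sumat g 0 1).im ^ 2 = 1 := by
  have h2 : (sumat g).det = 1 := g.2
  rw [Matrix.det_fin_two, mt_11, mt_10] at h2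
  have := congrArg Complex.re h2
  simp at this
  linarith

lemma mt_ext {g h : SU2} (h0 : sumat g 0 0 = sumat h 0 0) (h1 : sumat g 0 1 = sumat h 0 1) : g = h := by
  refine mt_inj ?_
  ext i j
  fin_cases i <;> fin_cases j
  · exact h0
  · exact h1
  · exact (mt_10 g).trans ((by rw [h1] : _ = _).trans (mt_10 h).symm)
  · exact (mt_11 g).trans ((by rw [h0] : _ = _).trans (mt_11 h).symm)

lemma re_ne_one {g : SU2} (hg : g ≠ 1) : 1 - (sumat g 0 0).re ≠ 0 := by
  intro h
  apply hg
  have h1 : (sumat g 0 0).re = 1 := by linarith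
  have h2 := mt_sq g
  rw [h1] at h2
  have e1 : (sumat g 0 0).im = 0 := by nlinarith [sq_nonneg (sumat g 0 0).im, sq_nonneg (sumat g 0 1).re, sq_nonneg (sumat g 0 1).im]
  have e2 : (sumat g 0 1).re = 0 := by nlinarith [sq_nonneg (sumat g 0 0).im, sq_nonneg (sumat g 0 1).re, sq_nonneg (sumat g 0 1).im]
  have e3 : (sumat g 0 1).im = 0 := by nlinarith [sq_nonneg (sumat g 0 0).im, sq_nonneg (sumat g 0 1).re, sq_nonneg (sumat g 0 1).im]
  have hone : sumat 1 = 1 := rfl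
  refine mt_ext ?_ ?_
  · rw [hone]; apply Complex.ext <;> simp [h1, e1]
  · rw [hone]; apply Complex.ext <;> simp [e2, e3]

def pmat (α β : ℂ) : Matrix (Fin 2) (Fin 2) ℂ := !![α, β; -star β, star α]

lemma pmat_det (α β : ℂ) (h : α * star α + β * star β = 1) : (pmat α β).det = 1 := by
  rw [pmat, Matrix.det_fin_two_of, ← h]; ring

lemma pmat_mem (α β : ℂ) (h : α * star α + β * star β = 1) :
    pmat α β ∈ Matrix.unitaryGroup (Fin 2) ℂ := by
  rw [Matrix.mem_unitaryGroup_iff]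
  have : star (pmat α β) = (pmat α β).adjugate := by
    rw [Matrix.adjugate_fin_two]
    ext i j
    fin_cases i <;> fin_cases j <;> simp [pmat, Matrix.star_apply]
  rw [this, Matrix.mul_adjugate, pmat_det α β h, one_smul]

def mkS (α β : ℂ) (h : α * star α + β * star β = 1) : SU2 :=
  ⟨⟨pmat α β, pmat_mem α β h⟩, pmat_det α β h⟩

def sq3 (y : E3) : ℝ := y 0 ^ 2 + y 1 ^ 2 + y 2 ^ 2

lemma sq3_pos (y : E3) : 0 < sq3 y + 1 := by unfold sq3; positivity

def pα (y : E3) : ℂ := ⟨(sq3 y - 1) / (sq3 y + 1), 2 * y 0 / (sq3 y + 1)⟩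
def pβ (y : E3) : ℂ := ⟨2 * y 1 / (sq3 y + 1), 2 * y 2 / (sq3 y + 1)⟩

lemma p_norm (y : E3) : pα y * star (pα y) + pβ y * star (pβ y) = 1 := by
  have h := (sq3_pos y).ne'
  apply Complex.ext
  · simp [pα, pβ]
    field_simp
    unfold sq3
    ring
  · simp [pα, pβ]
    ring

def psi (y : E3) : GTop := mkS (pα y) (pβ y) (p_norm y)

lemma psi_00 (y : E3) : sumat (psi y) 0 0 = pα y := rfl
lemma psi_01 (y : E3) : sumat (psi y) 0 1 = pβ y := rfl

lemma psi_cont : Continuous psi := by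
  have hs : Continuous sq3 := by unfold sq3; fun_prop
  have hα : Continuous pα := by
    have : pα = fun y => (((sq3 y - 1) / (sq3 y + 1) : ℝ) : ℂ) + ((2 * y 0 / (sq3 y + 1) : ℝ) : ℂ) * Complex.I := by
      funext y; exact Complex.mk_eq_add_mul_I _ _
    rw [this]
    have h1 : Continuous (fun y => (sq3 y - 1) / (sq3 y + 1)) :=
      (hs.sub continuous_const).div (hs.add continuous_const) (fun y => (sq3_pos y).ne')
    have h2 : Continuous (fun y : E3 => 2 * y 0 / (sq3 y + 1)) :=
      (by fun_prop : Continuous fun y : E3 => 2 * y 0).div (hs.add continuous_const) (fun y => (sq3_pos y).ne')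
    fun_prop
  have hβ : Continuous pβ := by
    have : pβ = fun y => ((2 * y 1 / (sq3 y + 1) : ℝ) : ℂ) + ((2 * y 2 / (sq3 y + 1) : ℝ) : ℂ) * Complex.I := by
      funext y; exact Complex.mk_eq_add_mul_I _ _
    rw [this]
    have h1 : Continuous (fun y : E3 => 2 * y 1 / (sq3 y + 1)) :=
      (by fun_prop : Continuous fun y : E3 => 2 * y 1).div (hs.add continuous_const) (fun y => (sq3_pos y).ne')
    have h2 : Continuous (fun y : E3 => 2 * y 2 / (sq3 y + 1)) :=
      (by fun_prop : Continuous fun y : E3 => 2 * y 2).div (hs.add continuous_const) (fun y => (sq3_pos y).ne')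
    fun_prop
  refine Continuous.subtype_mk (Continuous.subtype_mk ?_ _) _
  refine continuous_matrix fun i j => ?_
  fin_cases i <;> fin_cases j
  · exact hα
  · exact hβ
  · exact hβ.star.neg
  · exact hα.star

def xi (g : SU2) : E3 :=
  ![(sumat g 0 0).im / (1 - (sumat g 0 0).re), (sumat g 0 1).re / (1 - (sumat g 0 0).re),
    (sumat g 0 1).im / (1 - (sumat g 0 0).re)]

lemma psi_ne (y : E3) : psi y ≠ (1 : SU2) := by
  intro h
  have h1 : (sumat (psi y) 0 0).re = (sumat 1 0 0).re := by rw [h]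
  have h2 : (sumat 1 0 0).re = 1 := by
    have hone : sumat 1 = 1 := rfl
    rw [hone]; simp
  rw [h2, psi_00] at h1
  have h := (sq3_pos y).ne'
  simp only [pα] at h1
  rw [div_eq_one_iff_eq h] at h1
  linarith

lemma xi_psi (y : E3) : xi (psi y) = y := by
  have h := (sq3_pos y).ne'
  have h1 : 1 - (sumat (psi y) 0 0).re = 2 / (sq3 y + 1) := by
    rw [psi_00]; simp only [pα]; field_simp; ring
  unfold xi
  rw [h1, psi_00, psi_01]
  ext i
  fin_cases i <;> simp [pα, pβ] <;> field_simp

lemma psi_xi (g : SU2) (hg : g ≠ 1) : psi (xi g) = g := by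
  have h := re_ne_one hg
  have h2 := mt_sq g
  have e0 : xi g 0 = (sumat g 0 0).im / (1 - (sumat g 0 0).re) := rfl
  have e1 : xi g 1 = (sumat g 0 1).re / (1 - (sumat g 0 0).re) := rfl
  have e2 : xi g 2 = (sumat g 0 1).im / (1 - (sumat g 0 0).re) := rfl
  have h3 : sq3 (xi g) = (1 + (sumat g 0 0).re) / (1 - (sumat g 0 0).re) := by
    unfold sq3
    rw [e0, e1, e2]
    field_simp
    linarith
  have h4 : sq3 (xi g) + 1 = 2 / (1 - (sumat g 0 0).re) := by
    rw [h3]; field_simp; ring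
  have h5 : sq3 (xi g) - 1 = 2 * (sumat g 0 0).re / (1 - (sumat g 0 0).re) := by
    rw [h3]; field_simp; ring
  refine mt_ext ?_ ?_
  · rw [psi_00]
    apply Complex.ext
    · simp only [pα]; rw [h4, h5]; field_simp
    · simp only [pα]; rw [h4, e0]; field_simp
  · rw [psi_01]
    apply Complex.ext
    · simp only [pβ]; rw [h4, e1]; field_simp
    · simp only [pβ]; rw [h4, e2]; field_simp

lemma xi_cont : ContinuousOn xi ({(1 : SU2)}ᶜ) := by
  have hd : ∀ g ∈ ({(1 : SU2)}ᶜ : Set SU2), 1 - (sumat g 0 0).re ≠ 0 := fun g hg => re_ne_one hg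
  have c0 : Continuous (fun g => sumat g 0 0) := mt_cont.matrix_elem 0 0
  have c1 : Continuous (fun g => sumat g 0 1) := mt_cont.matrix_elem 0 1
  have cd : ContinuousOn (fun g => 1 - (sumat g 0 0).re) ({(1 : SU2)}ᶜ) :=
    (continuous_const.sub (Complex.continuous_re.comp c0)).continuousOn
  rw [continuousOn_pi]
  intro i
  fin_cases i
  · exact (Complex.continuous_im.comp c0).continuousOn.div cd hd
  · exact (Complex.continuous_re.comp c1).continuousOn.div cd hd
  · exact (Complex.continuous_im.comp c1).continuousOn.div cd hd

lemma psi_open : Topology.IsOpenEmbedding psi := by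
  refine Topology.IsOpenEmbedding.of_continuous_injective_isOpenMap psi_cont
    (Function.LeftInverse.injective (g := xi) xi_psi) ?_
  intro O hO
  have : psi '' O = ({(1 : SU2)}ᶜ : Set SU2) ∩ xi ⁻¹' O := by
    ext g
    constructor
    · rintro ⟨y, hy, rfl⟩
      refine ⟨psi_ne y, ?_⟩
      change xi (psi y) ∈ O
      rwa [xi_psi]
    · rintro ⟨hg, hO⟩
      exact ⟨xi g, hO, psi_xi g hg⟩
  rw [this]
  exact xi_cont.isOpen_inter_preimage isOpen_compl_singleton hO

lemma psi_range : Set.range psi = (UU : Set GTop) := by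
  ext g
  constructor
  · rintro ⟨y, rfl⟩
    exact psi_ne y
  · intro hg
    exact ⟨xi g, psi_xi g hg⟩


/-- `Ext^0(K, K) ≅ ℚ` and `Ext^n(K, K) = 0` for all `n ≠ 0`. -/
theorem ext_K_K :
    (Nonempty ((Abelian.Ext KK KK 0) ≃+ ℚ)) ∧
    (∀ n : ℕ, n ≠ 0 → Subsingleton (Abelian.Ext KK KK n)) := by
  exact main_aux psi_open psi_range

end
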